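/- For pointed metric spaces (X,x) and (Y,y), let D̃((X,x),(Y,y)) denote the infimum of all ε > 0 for which there exists an ε-coupling between (X,x) and (Y,y). Then for all pointed metric spaces (X,x), (Y,y), (Z,z): if D̃((X,x),(Y,y)) ≤ 1/2 and D̃((Y,y),(Z,z)) ≤ 1/2, then D̃((X,x),(Z,z)) ≤ D̃((X,x),(Y,y)) + D̃((Y,y),(Z,z)). -/

import Mathlib

open Metric Set ENNReal

/-- The set `A` in a space with distance function `d` has Nagata dimension at most `n`
with constant `c` at scale `s` (written `dim_N(A,c,s) ≤ n` in the paper): there is a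
cover `𝒰 = ⋃_{k=0}^n 𝒰 k` of `A` by subsets of `A`, each member having diameter at
most `s`, such that each family `𝒰 k` is `c*s`-separated. -/
def dimNle {X : Type*} (d : X → X → ℝ) (A : Set X) (c s : ℝ) (n : ℕ) : Prop :=
  ∃ 𝒰 : Fin (n + 1) → Set (Set X),
    (∀ k, ∀ U ∈ 𝒰 k, U ⊆ A) ∧
    (∀ p ∈ A, ∃ k, ∃ U ∈ 𝒰 k, p ∈ U) ∧
    (∀ k, ∀ U ∈ 𝒰 k, ∀ a ∈ U, ∀ b ∈ U, d a b ≤ s) ∧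
    (∀ k, ∀ U ∈ 𝒰 k, ∀ V ∈ 𝒰 k, U ≠ V → ∀ a ∈ U, ∀ b ∈ V, c * s ≤ d a b)

/-- `dimAle d A C Rbar β` (written `dim_A(A,C,Rbar) ≤ β` in the paper): for all
`0 < r < R < Rbar` and every `x ∈ A`, the ball of radius `R` around `x` in `A` can be
covered by at most `C * (R/r)^β` balls of radius `r` with centers in `A`. -/
def dimAle {X : Type*} (d : X → X → ℝ) (A : Set X) (C Rbar β : ℝ) : Prop :=
  ∀ r R : ℝ, 0 < r → r < R → R < Rbar → ∀ x ∈ A,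
    ∃ T : Finset X, ↑T ⊆ A ∧ (T.card : ℝ) ≤ C * (R / r) ^ β ∧
      ∀ z ∈ A, d z x < R → ∃ t ∈ T, d z t < r

/-- `d` is a metric distance function on `Y`: symmetric, triangle inequality, and
vanishing exactly on the diagonal. -/
def IsMetricDist {Y : Type*} (d : Y → Y → ℝ) : Prop :=
  (∀ a b, d a b = d b a) ∧ (∀ a b c, d a c ≤ d a b + d b c) ∧ (∀ a b, d a b = 0 ↔ a = b)

/-- An `ε`-coupling between the pointed spaces `(A, dA, a₀)` and `(B, dB, b₀)`:
a pseudometric on the disjoint union extending `dA` and `dB`, with `d(a₀,b₀) ≤ ε`,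
every point of `B_A(a₀,1/ε)` within distance `< ε` of a point of `B`, and every point
of `B_B(b₀,1/ε)` within distance `< ε` of a point of `A`. -/
def IsCoupling {A B : Type*} (dA : A → A → ℝ) (dB : B → B → ℝ) (a₀ : A) (b₀ : B)
    (ε : ℝ) (d : A ⊕ B → A ⊕ B → ℝ) : Prop :=
  (∀ p q, d p q = d q p) ∧
  (∀ p, d p p = 0) ∧
  (∀ p q r, d p r ≤ d p q + d q r) ∧
  (∀ u v : A, d (Sum.inl u) (Sum.inl v) = dA u v) ∧
  (∀ u v : B, d (Sum.inr u) (Sum.inr v) = dB u v) ∧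
  d (Sum.inl a₀) (Sum.inr b₀) ≤ ε ∧
  (∀ u : A, dA u a₀ < 1 / ε → ∃ v : B, d (Sum.inl u) (Sum.inr v) < ε) ∧
  (∀ v : B, dB v b₀ < 1 / ε → ∃ u : A, d (Sum.inl u) (Sum.inr v) < ε)

/-- The modified Gromov–Hausdorff measurement `D̃` of the paper: the infimum (in `ℝ≥0∞`,
so `inf ∅ = ∞`) of all `ε > 0` for which there is an `ε`-coupling between the two
pointed spaces. -/
noncomputable def ghDist {A B : Type*} (dA : A → A → ℝ) (dB : B → B → ℝ)
    (a₀ : A) (b₀ : B) : ℝ≥0∞ :=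
  sInf {e : ℝ≥0∞ | ∃ ε : ℝ, 0 < ε ∧ (∃ d, IsCoupling dA dB a₀ b₀ ε d) ∧
    e = ENNReal.ofReal ε}

/-!
A coupling is the same thing as a pair of distance-preserving maps into one ambient metric space.
Two couplings that share `Y` can be amalgamated along `Y`, after which everything takes place among
three pointed sets in a single metric space. There, a point of `X` in the ball of radius `1 / ε`
about `x` is `ε₁`-close to a point of `Y` in the ball of radius `1 / ε + 2 * ε₁` about `y`, and that
point is `ε₂`-close to `Z` as soon as `1 / ε + 2 * ε₁ ≤ 1 / ε₂`. For `ε = ε₁ + ε₂` this condition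
reads `ε₂ * (ε₁ + ε₂) ≤ 1 / 2`, whence the bound on `D̃`. If only the infima satisfy this bound,
every `ε > D̃(X, Y) + D̃(Y, Z)` still leaves enough room to pick `ε₁` and `ε₂` just above them.
-/

open Filter Topology

universe u v

section PointedSets

variable {W W' : Type*} [PseudoMetricSpace W] [PseudoMetricSpace W']

theorem inter_ball_subset_thickening_trans {S T U : Set W} {s t : W} {δ ε₁ ε₂ r r₁ r₂ : ℝ}
    (hst : dist s t ≤ δ) (hST : S ∩ ball s r₁ ⊆ thickening ε₁ T)
    (hTU : T ∩ ball t r₂ ⊆ thickening ε₂ U) (hr₁ : r ≤ r₁) (hr₂ : r + ε₁ + δ ≤ r₂) :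
    S ∩ ball s r ⊆ thickening (ε₁ + ε₂) U := by
  rintro p ⟨hpS, hps⟩
  obtain ⟨q, hqT, hpq⟩ := mem_thickening_iff.1 (hST ⟨hpS, ball_subset_ball hr₁ hps⟩)
  have hqt : dist q t < r₂ := by
    calc dist q t ≤ dist q p + dist p s + dist s t := dist_triangle4 q p s t
      _ < ε₁ + r + δ := by
        rw [dist_comm q p]
        exact add_lt_add_of_lt_of_le (add_lt_add hpq hps) hst
      _ ≤ r₂ := by linarith
  obtain ⟨w, hwU, hqw⟩ := mem_thickening_iff.1 (hTU ⟨hqT, hqt⟩)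
  exact mem_thickening_iff.2 ⟨w, hwU, (dist_triangle p q w).trans_lt (add_lt_add hpq hqw)⟩

theorem image_inter_ball_subset_thickening {i : W → W'} (hi : Isometry i) {S T : Set W} {s : W}
    {r ε : ℝ} (h : S ∩ ball s r ⊆ thickening ε T) :
    i '' S ∩ ball (i s) r ⊆ thickening ε (i '' T) := by
  rintro _ ⟨⟨p, hpS, rfl⟩, hps⟩
  obtain ⟨q, hqT, hpq⟩ := mem_thickening_iff.1 (h ⟨hpS, by rwa [mem_ball, hi.dist_eq] at hps⟩)
  exact mem_thickening_iff.2 ⟨i q, mem_image_of_mem i hqT, by rwa [hi.dist_eq]⟩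

/-- The pointed sets `(S, s)` and `(T, t)` of one metric space are `ε`-close in the pointed
Hausdorff sense: the requirements of an `ε`-coupling, read off inside an ambient space. -/
structure PointedClose (ε : ℝ) (S T : Set W) (s t : W) : Prop where
  dist_le : dist s t ≤ ε
  subset_left : S ∩ ball s (1 / ε) ⊆ thickening ε T
  subset_right : T ∩ ball t (1 / ε) ⊆ thickening ε S

namespace PointedClose

variable {S T U : Set W} {s t u : W} {ε ε₁ ε₂ : ℝ}

theorem nonneg (h : PointedClose ε S T s t) : 0 ≤ ε :=
  dist_nonneg.trans h.dist_le

theorem image {i : W → W'} (hi : Isometry i) (h : PointedClose ε S T s t) :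
    PointedClose ε (i '' S) (i '' T) (i s) (i t) where
  dist_le := (hi.dist_eq s t).trans_le h.dist_le
  subset_left := image_inter_ball_subset_thickening hi h.subset_left
  subset_right := image_inter_ball_subset_thickening hi h.subset_right

theorem trans (h₁ : PointedClose ε₁ S T s t) (h₂ : PointedClose ε₂ T U t u)
    (hε : ε₁ + ε₂ ≤ ε) (hε₂ : 1 / ε + 2 * ε₁ ≤ 1 / ε₂) (hε₁ : 1 / ε + 2 * ε₂ ≤ 1 / ε₁) :
    PointedClose ε S U s u where
  dist_le := (dist_triangle s t u).trans <| (add_le_add h₁.dist_le h₂.dist_le).trans hε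
  subset_left := by
    refine (inter_ball_subset_thickening_trans h₁.dist_le h₁.subset_left h₂.subset_left
      ?_ ?_).trans (thickening_mono hε U)
    · linarith [h₂.nonneg]
    · linarith
  subset_right := by
    have hut : dist u t ≤ ε₂ := dist_comm t u ▸ h₂.dist_le
    refine (inter_ball_subset_thickening_trans hut h₂.subset_right h₁.subset_right
      ?_ ?_).trans (thickening_mono (by linarith) S)
    · linarith [h₁.nonneg]
    · linarith

end PointedClose

end PointedSets

theorem exists_isometry_comp_eq_comp {Y : Type*} [Nonempty Y] {W₁ : Type u} {W₂ : Type v}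
    [MetricSpace W₁] [MetricSpace W₂] (f : Y → W₁) (g : Y → W₂)
    (hfg : ∀ a b, dist (f a) (f b) = dist (g a) (g b)) :
    ∃ (W : Type (max u v)) (_ : MetricSpace W) (i : W₁ → W) (j : W₂ → W),
      Isometry i ∧ Isometry j ∧ i ∘ f = j ∘ g := by
  -- `f` need not be injective, so the spaces are glued along its range rather than along `Y`.
  let Ψ : range f → W₂ := g ∘ rangeSplitting f
  have hΨ : Isometry Ψ := Isometry.of_dist_eq fun p q => by
    simp only [Ψ, Function.comp_apply, ← hfg, apply_rangeSplitting, Subtype.dist_eq]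
  have hΨf (a : Y) : Ψ ⟨f a, mem_range_self a⟩ = g a := by
    simp only [Ψ, Function.comp_apply, ← dist_eq_zero, ← hfg, apply_rangeSplitting, dist_self]
  refine ⟨GlueSpace isometry_subtype_coe hΨ, inferInstance, toGlueL _ hΨ, toGlueR _ hΨ,
    toGlueL_isometry _ hΨ, toGlueR_isometry _ hΨ, funext fun a => ?_⟩
  have hglue := congr_fun (toGlue_commute isometry_subtype_coe hΨ) ⟨f a, mem_range_self a⟩
  simpa only [Function.comp_apply, hΨf] using hglue

section Couplings

variable {A : Type u} {B : Type v} {C : Type*} {dA : A → A → ℝ} {dB : B → B → ℝ} {dC : C → C → ℝ}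
  {a : A} {b : B} {c : C} {ε ε₁ ε₂ : ℝ}

theorem PointedClose.isCoupling {W : Type*} [PseudoMetricSpace W] {f : A → W} {g : B → W}
    (h : PointedClose ε (range f) (range g) (f a) (g b))
    (hf : ∀ p q, dist (f p) (f q) = dA p q) (hg : ∀ p q, dist (g p) (g q) = dB p q) :
    IsCoupling dA dB a b ε (fun p q => dist (Sum.elim f g p) (Sum.elim f g q)) := by
  refine ⟨fun _ _ => dist_comm _ _, fun _ => dist_self _, fun _ _ _ => dist_triangle _ _ _,
    hf, hg, h.dist_le, fun p hp => ?_, fun q hq => ?_⟩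
  · obtain ⟨_, ⟨q, rfl⟩, hpq⟩ :=
      mem_thickening_iff.1 (h.subset_left ⟨mem_range_self p, (hf p a).trans_lt hp⟩)
    exact ⟨q, hpq⟩
  · obtain ⟨_, ⟨p, rfl⟩, hqp⟩ :=
      mem_thickening_iff.1 (h.subset_right ⟨mem_range_self q, (hg q b).trans_lt hq⟩)
    exact ⟨p, (dist_comm _ _).trans_lt hqp⟩

namespace IsCoupling

theorem exists_pointedClose {d : A ⊕ B → A ⊕ B → ℝ} (h : IsCoupling dA dB a b ε d) :
    ∃ (W : Type (max u v)) (_ : MetricSpace W) (f : A → W) (g : B → W),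
      (∀ p q, dist (f p) (f q) = dA p q) ∧ (∀ p q, dist (g p) (g q) = dB p q) ∧
        PointedClose ε (range f) (range g) (f a) (g b) := by
  obtain ⟨hcomm, hself, htri, hA, hB, hab, hleft, hright⟩ := h
  let _ : PseudoMetricSpace (A ⊕ B) :=
    { dist := d, dist_self := hself, dist_comm := hcomm, dist_triangle := htri }
  refine ⟨SeparationQuotient (A ⊕ B), inferInstance, SeparationQuotient.mk ∘ Sum.inl,
    SeparationQuotient.mk ∘ Sum.inr, hA, hB, hab, ?_, ?_⟩
  · rintro _ ⟨⟨p, rfl⟩, hp⟩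
    obtain ⟨q, hpq⟩ := hleft p ((hA p a).symm.trans_lt hp)
    exact mem_thickening_iff.2 ⟨_, mem_range_self q, hpq⟩
  · rintro _ ⟨⟨q, rfl⟩, hq⟩
    obtain ⟨p, hpq⟩ := hright q ((hB q b).symm.trans_lt hq)
    exact mem_thickening_iff.2 ⟨_, mem_range_self p, (hcomm _ _).trans_lt hpq⟩

theorem mono {d : A ⊕ B → A ⊕ B → ℝ} (h : IsCoupling dA dB a b ε₁ d) (hε₁ : 0 < ε₁)
    (hε : ε₁ ≤ ε₂) : IsCoupling dA dB a b ε₂ d := by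
  obtain ⟨hcomm, hself, htri, hA, hB, hab, hleft, hright⟩ := h
  have hinv : 1 / ε₂ ≤ 1 / ε₁ := one_div_le_one_div_of_le hε₁ hε
  exact ⟨hcomm, hself, htri, hA, hB, hab.trans hε,
    fun p hp => (hleft p (hp.trans_le hinv)).imp fun _ hpq => hpq.trans_le hε,
    fun q hq => (hright q (hq.trans_le hinv)).imp fun _ hpq => hpq.trans_le hε⟩

theorem exists_trans {d₁ : A ⊕ B → A ⊕ B → ℝ} {d₂ : B ⊕ C → B ⊕ C → ℝ}
    (h₁ : IsCoupling dA dB a b ε₁ d₁) (h₂ : IsCoupling dB dC b c ε₂ d₂)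
    (hε : ε₁ + ε₂ ≤ ε) (hε₂ : 1 / ε + 2 * ε₁ ≤ 1 / ε₂) (hε₁ : 1 / ε + 2 * ε₂ ≤ 1 / ε₁) :
    ∃ d, IsCoupling dA dC a c ε d := by
  obtain ⟨W₁, _, fA, fB, hfA, hfB, hAB⟩ := h₁.exists_pointedClose
  obtain ⟨W₂, _, gB, gC, hgB, hgC, hBC⟩ := h₂.exists_pointedClose
  have : Nonempty B := ⟨b⟩
  obtain ⟨W, _, i, j, hi, hj, hij⟩ :=
    exists_isometry_comp_eq_comp fB gB fun p q => (hfB p q).trans (hgB p q).symm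
  have hABW : PointedClose ε₁ (range (i ∘ fA)) (range (i ∘ fB)) ((i ∘ fA) a) ((i ∘ fB) b) := by
    rw [range_comp, range_comp]
    exact hAB.image hi
  have hBCW : PointedClose ε₂ (range (i ∘ fB)) (range (j ∘ gC)) ((i ∘ fB) b) ((j ∘ gC) c) := by
    rw [hij, range_comp, range_comp]
    exact hBC.image hj
  exact ⟨_, (hABW.trans hBCW hε hε₂ hε₁).isCoupling
    (fun p q => (hi.dist_eq _ _).trans (hfA p q)) (fun p q => (hj.dist_eq _ _).trans (hgC p q))⟩

end IsCoupling

theorem ghDist_le_ofReal {d : A ⊕ B → A ⊕ B → ℝ} (hε : 0 < ε) (h : IsCoupling dA dB a b ε d) :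
    ghDist dA dB a b ≤ ENNReal.ofReal ε :=
  sInf_le ⟨ε, hε, ⟨d, h⟩, rfl⟩

theorem exists_isCoupling_of_ghDist_lt (h : ghDist dA dB a b < ENNReal.ofReal ε) :
    ∃ d, IsCoupling dA dB a b ε d := by
  obtain ⟨_, ⟨ε', hε', ⟨d, hd⟩, rfl⟩, hlt⟩ := sInf_lt_iff.1 h
  exact ⟨d, hd.mono hε' ((ENNReal.ofReal_lt_ofReal_iff_of_nonneg hε'.le).1 hlt).le⟩

end Couplings

section Scales

variable {p q e : ℝ}

theorem mul_one_div_add_two_mul_lt_one (hp : 0 ≤ p) (hq : 0 ≤ q) (hpq : q * (p + q) ≤ 1 / 2)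
    (he : p + q < e) : q * (1 / e + 2 * p) < 1 := by
  obtain rfl | hq := hq.eq_or_lt
  · simp only [zero_mul, zero_lt_one]
  calc q * (1 / e + 2 * p) < q * (1 / (p + q) + 2 * p) := by gcongr
    _ = (q + 2 * p * (q * (p + q))) / (p + q) := by field_simp
    _ ≤ (q + 2 * p * (1 / 2)) / (p + q) := by gcongr
    _ = 1 := by field_simp; ring

theorem eventually_one_div_add_two_mul_le (hp : 0 ≤ p) (hq : 0 ≤ q) (hpq : q * (p + q) ≤ 1 / 2)
    (he : p + q < e) : ∀ᶠ η in 𝓝[>] (0 : ℝ), 1 / e + 2 * (p + η) ≤ 1 / (q + η) := by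
  have hlt : ∀ᶠ η in 𝓝 (0 : ℝ), (q + η) * (1 / e + 2 * (p + η)) < 1 := by
    refine ContinuousAt.eventually_lt (by fun_prop) continuousAt_const ?_
    simpa only [add_zero] using mul_one_div_add_two_mul_lt_one hp hq hpq he
  filter_upwards [nhdsWithin_le_nhds hlt, self_mem_nhdsWithin] with η hη hη0
  rw [le_div_iff₀' (add_pos_of_nonneg_of_pos hq hη0)]
  exact hη.le

theorem exists_scales_gt (hp : 0 ≤ p) (hq : 0 ≤ q) (hpq : max p q * (p + q) ≤ 1 / 2)
    (he : p + q < e) :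
    ∃ ε₁ > p, ∃ ε₂ > q,
      ε₁ + ε₂ ≤ e ∧ 1 / e + 2 * ε₁ ≤ 1 / ε₂ ∧ 1 / e + 2 * ε₂ ≤ 1 / ε₁ := by
  have hq' : q * (p + q) ≤ 1 / 2 := le_trans (by gcongr; exact le_max_right p q) hpq
  have hp' : p * (q + p) ≤ 1 / 2 := by
    rw [add_comm q p]
    exact le_trans (by gcongr; exact le_max_left p q) hpq
  have hsum : ∀ᶠ η in 𝓝[>] (0 : ℝ), (p + η) + (q + η) < e :=
    nhdsWithin_le_nhds <|
      ContinuousAt.eventually_lt (by fun_prop) continuousAt_const (by simpa only [add_zero])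
  obtain ⟨η, h₂, h₁, hη, hη0⟩ := ((eventually_one_div_add_two_mul_le hp hq hq' he).and <|
    (eventually_one_div_add_two_mul_le hq hp hp' (by rwa [add_comm])).and <|
      hsum.and self_mem_nhdsWithin).exists
  exact ⟨p + η, lt_add_of_pos_right p hη0, q + η, lt_add_of_pos_right q hη0, hη.le, h₂, h₁⟩

end Scales

theorem ghDist_triangle_general {X Y Z : Type*} (dX : X → X → ℝ) (dY : Y → Y → ℝ) (dZ : Z → Z → ℝ)
    (x : X) (y : Y) (z : Z)
    (h : max (ghDist dX dY x y) (ghDist dY dZ y z) *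
      (ghDist dX dY x y + ghDist dY dZ y z) ≤ 1 / 2) :
    ghDist dX dZ x z ≤ ghDist dX dY x y + ghDist dY dZ y z := by
  refine ENNReal.le_of_forall_pos_le_add fun δ hδ hfin => ?_
  obtain ⟨hXY, hYZ⟩ := ENNReal.add_ne_top.1 hfin.ne
  set p := (ghDist dX dY x y).toReal with hp
  set q := (ghDist dY dZ y z).toReal with hq
  have hpq : max p q * (p + q) ≤ 1 / 2 := by
    simpa [hp, hq, ENNReal.toReal_max hXY hYZ, ENNReal.toReal_add hXY hYZ]
      using ENNReal.toReal_mono (by simp) h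
  have he : p + q < p + q + δ := lt_add_of_pos_right _ hδ
  obtain ⟨ε₁, hε₁, ε₂, hε₂, hsum, h₂, h₁⟩ :=
    exists_scales_gt toReal_nonneg toReal_nonneg hpq he
  obtain ⟨d₁, hd₁⟩ := exists_isCoupling_of_ghDist_lt ((lt_ofReal_iff_toReal_lt hXY).2 hε₁)
  obtain ⟨d₂, hd₂⟩ := exists_isCoupling_of_ghDist_lt ((lt_ofReal_iff_toReal_lt hYZ).2 hε₂)
  obtain ⟨d, hd⟩ := hd₁.exists_trans hd₂ hsum h₂ h₁
  calc ghDist dX dZ x z ≤ ENNReal.ofReal (p + q + δ) := ghDist_le_ofReal (by positivity) hd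
    _ = ghDist dX dY x y + ghDist dY dZ y z + δ := by
      rw [ofReal_add (by positivity) δ.coe_nonneg, ofReal_add toReal_nonneg toReal_nonneg,
        ofReal_toReal hXY, ofReal_toReal hYZ, ofReal_coe_nnreal]

/-- If `D̃((X,x),(Y,y)) ≤ 1/2` and `D̃((Y,y),(Z,z)) ≤ 1/2`, then
`D̃((X,x),(Z,z)) ≤ D̃((X,x),(Y,y)) + D̃((Y,y),(Z,z))`. -/
theorem ghDist_triangle {X Y Z : Type*} [MetricSpace X] [MetricSpace Y] [MetricSpace Z]
    (x : X) (y : Y) (z : Z)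
    (h1 : ghDist (fun a b : X => dist a b) (fun a b : Y => dist a b) x y ≤ 1/2)
    (h2 : ghDist (fun a b : Y => dist a b) (fun a b : Z => dist a b) y z ≤ 1/2) :
    ghDist (fun a b : X => dist a b) (fun a b : Z => dist a b) x z ≤
      ghDist (fun a b : X => dist a b) (fun a b : Y => dist a b) x y +
      ghDist (fun a b : Y => dist a b) (fun a b : Z => dist a b) y z := by
  refine ghDist_triangle_general _ _ _ x y z ?_
  simpa only [ENNReal.add_halves, mul_one] using mul_le_mul' (max_le h1 h2) (add_le_add h1 h2)
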